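/- The function θ₁(r) = (1−r²)/(1+r²)^{3/2} satisfies θ₁''(r) + (2/r)·θ₁'(r) + (15/(1+r²)²)·θ₁(r) = 0 for all r ∈ (0,1], together with θ₁(1) = 0, θ₁'(0) = 0 (the derivative of θ₁ at r = 0 exists and equals 0), and θ₁(r) > 0 for all r ∈ [0,1). In other words, θ₁ is a zero-eigenvalue eigenfunction (the principal eigenfunction) of the linearization of the radial Lichnerowicz–York equation at the critical solution α = 1. -/

import Mathlib

/-- The principal eigenfunction `θ₁(r) = (1−r²)/(1+r²)^{3/2}` of the linearization
at the critical solution `α = 1`. -/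
noncomputable def theta1 (r : ℝ) : ℝ := (1 - r ^ 2) / (1 + r ^ 2) ^ ((3 : ℝ) / 2)

/-!
The Lane–Emden equation `Δu + c u ^ p = 0` is invariant under the dilations `u ↦ lᵏ u(l ·)` with
`k (p - 1) = 2`, so differentiating this one-parameter family of solutions at `l = 1` produces the
solution `k u + r u'` of the linearized equation; infinitesimally, the generator of dilations of
weight `k` becomes that of weight `k + 2` on passing through the Laplacian. For the critical
exponent `p = (n + 2) / (n - 2)` in dimension `n` the function `(1 + r²)^(1 - n/2)` solves the
equation with `c = n (n - 2)`, and the solution of the linearized equation obtained from it is a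
multiple of `(1 - r²) / (1 + r²)^(n/2)`, which is `θ₁` when `n = 3`. The linearized potential is
then `c p u ^ (p - 1) = n (n + 2) / (1 + r²)²`.
-/

open Filter Topology

lemma hasDerivAt_zero_of_even {f : ℝ → ℝ} (heven : f.Even) (hf : DifferentiableAt ℝ f 0) :
    HasDerivAt f 0 0 := by
  have hderiv : deriv f 0 = -deriv f 0 := by
    simpa only [heven.eq, neg_zero] using deriv_comp_neg f 0
  simpa only [self_eq_neg.mp hderiv] using hf.hasDerivAt

/-- The Laplacian of `ℝⁿ` acting on radial profiles, for an arbitrary real dimension `n`. It is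
only meaningful for `r ≠ 0`, since `(n - 1) / 0 = 0`. -/
noncomputable def radialLaplacian (n : ℝ) (u : ℝ → ℝ) (r : ℝ) : ℝ :=
  deriv (deriv u) r + ((n - 1) / r) * deriv u r

/-- The infinitesimal generator of the dilations of weight `k`: the derivative at `l = 1` of
`l ↦ lᵏ u(l r)`. -/
noncomputable def dilationGenerator (k : ℝ) (u : ℝ → ℝ) (r : ℝ) : ℝ :=
  k * u r + r * deriv u r

section Dilation

variable {n k r : ℝ} {u v : ℝ → ℝ}

lemma radialLaplacian_const_mul (c : ℝ) :
    radialLaplacian n (fun s => c * u s) r = c * radialLaplacian n u r := by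
  simp only [radialLaplacian, deriv_const_mul_field']
  ring

lemma dilationGenerator_congr (h : u =ᶠ[𝓝 r] v) :
    dilationGenerator k u r = dilationGenerator k v r := by
  rw [dilationGenerator, dilationGenerator, h.eq_of_nhds, h.deriv_eq]

lemma deriv_dilationGenerator (hu : DifferentiableAt ℝ u r)
    (hu' : DifferentiableAt ℝ (deriv u) r) :
    deriv (dilationGenerator k u) r = dilationGenerator (k + 1) (deriv u) r := by
  have h := (hu.hasDerivAt.const_mul k).add ((hasDerivAt_id r).mul hu'.hasDerivAt)
  refine h.deriv.trans ?_
  simp only [dilationGenerator, id_eq]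
  ring

lemma deriv_deriv_dilationGenerator (hu : ContDiffAt ℝ 3 u r) :
    deriv (deriv (dilationGenerator k u)) r =
      dilationGenerator (k + 2) (deriv (deriv u)) r := by
  have hu' : ContDiffAt ℝ 2 (deriv u) r := hu.derivWithin (by norm_num)
  have hu'' : ContDiffAt ℝ 1 (deriv (deriv u)) r := hu'.derivWithin (by norm_num)
  have hderiv : deriv (dilationGenerator k u) =ᶠ[𝓝 r] dilationGenerator (k + 1) (deriv u) := by
    filter_upwards [hu.eventually (by simp), hu'.eventually (by simp)] with s hs hs'
    exact deriv_dilationGenerator (hs.differentiableAt (by simp)) (hs'.differentiableAt (by simp))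
  rw [hderiv.deriv_eq, deriv_dilationGenerator (hu'.differentiableAt (by simp))
    (hu''.differentiableAt (by simp)), add_assoc, one_add_one_eq_two]

theorem radialLaplacian_dilationGenerator (hr : r ≠ 0) (hu : ContDiffAt ℝ 3 u r) :
    radialLaplacian n (dilationGenerator k u) r =
      dilationGenerator (k + 2) (radialLaplacian n u) r := by
  have hu' : ContDiffAt ℝ 2 (deriv u) r := hu.derivWithin (by norm_num)
  have hu'' : ContDiffAt ℝ 1 (deriv (deriv u)) r := hu'.derivWithin (by norm_num)
  have hinv : HasDerivAt (fun s => (n - 1) / s) (-((n - 1) / r ^ 2)) r := by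
    simpa [div_eq_mul_inv] using (hasDerivAt_inv hr).const_mul (n - 1)
  have hderiv : deriv (radialLaplacian n u) r = deriv (deriv (deriv u)) r +
      (-((n - 1) / r ^ 2) * deriv u r + (n - 1) / r * deriv (deriv u) r) :=
    ((hu''.differentiableAt (by simp)).hasDerivAt.add
      (hinv.mul (hu'.differentiableAt (by simp)).hasDerivAt)).deriv
  rw [radialLaplacian, deriv_deriv_dilationGenerator hu,
    deriv_dilationGenerator (hu.differentiableAt (by simp)) (hu'.differentiableAt (by simp))]
  simp only [dilationGenerator, hderiv, radialLaplacian]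
  field_simp
  ring

theorem radialLaplacian_dilationGenerator_of_laneEmden {c p : ℝ} (hk : k * (p - 1) = 2)
    (hr : r ≠ 0) (hu : ContDiffAt ℝ 3 u r) (hur : u r ≠ 0)
    (hΔ : ∀ᶠ s in 𝓝 r, radialLaplacian n u s = -(c * u s ^ p)) :
    radialLaplacian n (dilationGenerator k u) r =
      -(c * p * u r ^ (p - 1) * dilationGenerator k u r) := by
  have hderiv : deriv (fun s => -(c * u s ^ p)) r = -(c * (deriv u r * p * u r ^ (p - 1))) :=
    (((hu.differentiableAt (by simp)).hasDerivAt.rpow_const (.inl hur)).const_mul c).neg.deriv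
  have hpow : u r ^ p = u r ^ (p - 1) * u r := by
    rw [Real.rpow_sub_one hur, div_mul_cancel₀ _ hur]
  rw [radialLaplacian_dilationGenerator hr hu, dilationGenerator_congr hΔ]
  simp only [dilationGenerator, hderiv, hpow]
  linear_combination c * u r ^ (p - 1) * u r * hk

end Dilation

section Bubble

variable {n r : ℝ}

lemma one_add_sq_rpow_eq_sub_one_mul (a r : ℝ) :
    (1 + r ^ 2) ^ a = (1 + r ^ 2) ^ (a - 1) * (1 + r ^ 2) := by
  have h : 1 + r ^ 2 ≠ 0 := by positivity
  rw [Real.rpow_sub_one h, div_mul_cancel₀ _ h]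

lemma contDiff_one_add_sq_rpow (a : ℝ) {m : WithTop ℕ∞} :
    ContDiff ℝ m fun r : ℝ => (1 + r ^ 2) ^ a :=
  ContDiff.rpow_const_of_ne (by fun_prop) fun r => by positivity

lemma deriv_one_add_sq_rpow (a : ℝ) :
    deriv (fun r : ℝ => (1 + r ^ 2) ^ a) = fun r => 2 * a * (r * (1 + r ^ 2) ^ (a - 1)) := by
  ext r
  have hsq : HasDerivAt (fun s : ℝ => 1 + s ^ 2) (2 * r) r := by
    simpa using (hasDerivAt_pow 2 r).const_add 1
  rw [(hsq.rpow_const (.inl (by positivity))).deriv]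
  ring

lemma radialLaplacian_one_add_sq_rpow (n a : ℝ) (hr : r ≠ 0) :
    radialLaplacian n (fun s => (1 + s ^ 2) ^ a) r =
      2 * a * (n + (n + 2 * a - 2) * r ^ 2) * (1 + r ^ 2) ^ (a - 2) := by
  have hdiff : DifferentiableAt ℝ (fun s : ℝ => (1 + s ^ 2) ^ (a - 1)) r :=
    (contDiff_one_add_sq_rpow (a - 1)).differentiable one_ne_zero r
  have hpow : (1 + r ^ 2) ^ (a - 1) = (1 + r ^ 2) ^ (a - 2) * (1 + r ^ 2) := by
    rw [one_add_sq_rpow_eq_sub_one_mul, sub_sub, one_add_one_eq_two]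
  rw [radialLaplacian, deriv_one_add_sq_rpow, deriv_const_mul_field,
    deriv_fun_mul differentiableAt_fun_id hdiff, deriv_one_add_sq_rpow, deriv_id'']
  simp only [hpow, sub_sub, one_add_one_eq_two]
  field_simp
  ring

/-- The standard bubble of the critical Lane–Emden equation in dimension `n`. For `n = 3` it is the
critical solution `φ_c`, up to the factor `√2`. -/
noncomputable def bubble (n r : ℝ) : ℝ := (1 + r ^ 2) ^ (1 - n / 2)

/-- The generator of dilations applied to `bubble n`, without its factor `n / 2 - 1`: a radial zero
mode of the critical Lane–Emden equation linearized at `bubble n`. -/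
noncomputable def bubbleZeroMode (n r : ℝ) : ℝ := (1 - r ^ 2) / (1 + r ^ 2) ^ (n / 2)

lemma bubble_pos (n r : ℝ) : 0 < bubble n r := by
  unfold bubble
  positivity

lemma contDiff_bubble (n : ℝ) {m : WithTop ℕ∞} : ContDiff ℝ m (bubble n) :=
  contDiff_one_add_sq_rpow (1 - n / 2)

lemma bubble_rpow (n r a : ℝ) : bubble n r ^ a = (1 + r ^ 2) ^ ((1 - n / 2) * a) :=
  (Real.rpow_mul (by positivity) _ _).symm

theorem radialLaplacian_bubble (hn : n ≠ 2) (hr : r ≠ 0) :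
    radialLaplacian n (bubble n) r = -(n * (n - 2) * bubble n r ^ ((n + 2) / (n - 2))) := by
  have hn' : n - 2 ≠ 0 := sub_ne_zero.mpr hn
  have hexp : (1 - n / 2) * ((n + 2) / (n - 2)) = 1 - n / 2 - 2 := by
    field_simp
    ring
  rw [bubble_rpow, hexp]
  -- `1 - n / 2` is the nonzero exponent for which the coefficient of `r²` vanishes.
  refine (radialLaplacian_one_add_sq_rpow n (1 - n / 2) hr).trans ?_
  ring

theorem dilationGenerator_bubble (n : ℝ) :
    dilationGenerator (n / 2 - 1) (bubble n) = fun r => (n / 2 - 1) * bubbleZeroMode n r := by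
  ext r
  have hderiv : deriv (bubble n) r =
      2 * (1 - n / 2) * (r * (1 + r ^ 2) ^ (1 - n / 2 - 1)) :=
    congrFun (deriv_one_add_sq_rpow (1 - n / 2)) r
  rw [dilationGenerator, hderiv, bubble, bubbleZeroMode, one_add_sq_rpow_eq_sub_one_mul,
    show 1 - n / 2 - 1 = -(n / 2) by ring, Real.rpow_neg (by positivity)]
  ring

theorem radialLaplacian_bubbleZeroMode (hn : n ≠ 2) (hr : r ≠ 0) :
    radialLaplacian n (bubbleZeroMode n) r =
      -(n * (n + 2) / (1 + r ^ 2) ^ 2 * bubbleZeroMode n r) := by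
  have hn' : n - 2 ≠ 0 := sub_ne_zero.mpr hn
  have hk : (n / 2 - 1) * ((n + 2) / (n - 2) - 1) = 2 := by
    field_simp
    ring
  have hlinearized := radialLaplacian_dilationGenerator_of_laneEmden hk hr
    (contDiff_bubble n).contDiffAt (bubble_pos n r).ne'
    ((eventually_ne_nhds hr).mono fun _ hs => radialLaplacian_bubble hn hs)
  have hpotential : bubble n r ^ ((n + 2) / (n - 2) - 1) = ((1 + r ^ 2) ^ 2)⁻¹ := by
    rw [bubble_rpow, show (1 - n / 2) * ((n + 2) / (n - 2) - 1) = -2 by linear_combination -hk,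
      Real.rpow_neg (by positivity), Real.rpow_two]
  rw [dilationGenerator_bubble, radialLaplacian_const_mul, hpotential] at hlinearized
  refine mul_left_cancel₀ (left_ne_zero_of_mul (hk ▸ two_ne_zero)) (hlinearized.trans ?_)
  field_simp

lemma bubbleZeroMode_one (n : ℝ) : bubbleZeroMode n 1 = 0 := by
  simp [bubbleZeroMode]

lemma hasDerivAt_bubbleZeroMode_zero (n : ℝ) : HasDerivAt (bubbleZeroMode n) 0 0 := by
  refine hasDerivAt_zero_of_even (fun r => by simp only [bubbleZeroMode, neg_sq]) ?_
  exact DifferentiableAt.div (by fun_prop)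
    ((contDiff_one_add_sq_rpow (n / 2)).differentiable one_ne_zero 0) (by simp)

lemma bubbleZeroMode_pos (n : ℝ) (hr : |r| < 1) : 0 < bubbleZeroMode n r :=
  div_pos (sub_pos.mpr ((sq_lt_one_iff_abs_lt_one r).mpr hr)) (by positivity)

lemma theta1_eq_bubbleZeroMode : theta1 = bubbleZeroMode 3 := rfl

end Bubble

theorem theta1_principal_eigenfunction_general {n : ℝ} (hn : n ≠ 2) :
    (∀ r ≠ 0,
      deriv (deriv (bubbleZeroMode n)) r + ((n - 1) / r) * deriv (bubbleZeroMode n) r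
        + (n * (n + 2) / (1 + r ^ 2) ^ 2) * bubbleZeroMode n r = 0) ∧
    bubbleZeroMode n 1 = 0 ∧
    HasDerivAt (bubbleZeroMode n) 0 0 ∧
    (∀ r, |r| < 1 → 0 < bubbleZeroMode n r) :=
  ⟨fun _ hr => eq_neg_iff_add_eq_zero.mp (radialLaplacian_bubbleZeroMode hn hr),
    bubbleZeroMode_one n, hasDerivAt_bubbleZeroMode_zero n, fun _ => bubbleZeroMode_pos n⟩

/-- `θ₁(r) = (1−r²)/(1+r²)^{3/2}` satisfies
`θ₁'' + (2/r)θ₁' + (15/(1+r²)²)θ₁ = 0` on `(0,1]`, with `θ₁(1) = 0`, `θ₁'(0) = 0`,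
and `θ₁ > 0` on `[0,1)`: it is a zero-eigenvalue (principal) eigenfunction of the
linearization of the radial Lichnerowicz–York equation at the critical solution. -/
theorem theta1_principal_eigenfunction :
    (∀ r ∈ Set.Ioc (0 : ℝ) 1,
      deriv (deriv theta1) r + (2 / r) * deriv theta1 r
        + (15 / (1 + r ^ 2) ^ 2) * theta1 r = 0) ∧
    theta1 1 = 0 ∧
    HasDerivAt theta1 0 0 ∧
    (∀ r ∈ Set.Ico (0 : ℝ) 1, 0 < theta1 r) := by
  obtain ⟨hode, hone, hzero, hpos⟩ :=
    theta1_principal_eigenfunction_general (n := 3) (by norm_num)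
  rw [theta1_eq_bubbleZeroMode]
  exact ⟨fun r hr => by convert hode r hr.1.ne' using 4 <;> norm_num, hone, hzero,
    fun r hr => hpos r ((abs_of_nonneg hr.1).trans_lt hr.2)⟩
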